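/- For all integers p ≥ 2 with p ≠ 4 and all m ≥ 2, the distinguishing number of the circulant graph C(m,p) is at most m + 1. -/

import Mathlib

/-!
Let `π : ℤ_{mp} → ℤ_p` be the reduction. Then `x` and `y` are adjacent in `C(m,p)` iff
`π y - π x = ±1` (`circC_adj_iff`), so `C(m,p)` is the cycle `C_p` (or `K_2` for `p = 2`) with each
vertex blown up to `m` independent ones. For `p ≠ 4` two vertices have the same neighbours iff they
lie in the same fibre of `π` (`fibre_eq_iff_twin`), hence every automorphism permutes the fibres.

With `m + 1` labels, the `m` vertices of the fibre over `i` receive all labels except one, `gap i`,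
each exactly once, where `gap 0`, `gap 1` are unique to these two fibres. A label-preserving
automorphism preserves the missing label of each fibre, so it fixes the fibres over `0` and `1`;
walking along the cycle, it fixes all fibres, and then all vertices, since labels are distinct
within a fibre.
-/

/-- A permutation of the vertices is a graph automorphism if it preserves adjacency. -/
def IsGraphAut {V : Type*} (G : SimpleGraph V) (σ : Equiv.Perm V) : Prop :=
  ∀ u v : V, G.Adj (σ u) (σ v) ↔ G.Adj u v

/-- A labeling with `r` labels is distinguishing if no nontrivial automorphism preserves it. -/
def IsDistinguishing {V : Type*} (G : SimpleGraph V) {r : ℕ} (c : V → Fin r) : Prop :=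
  ∀ σ : Equiv.Perm V, IsGraphAut G σ → (∀ v, c (σ v) = c v) → σ = Equiv.refl V

/-- The distinguishing number of a graph: the least `r` admitting an `r`-distinguishing
labeling. -/
noncomputable def distinguishingNumber {V : Type*} (G : SimpleGraph V) : ℕ :=
  sInf {r : ℕ | ∃ c : V → Fin r, IsDistinguishing G c}

/-- The jump set `A = {p-1+r·p, p+1+r·p : 0 ≤ r ≤ m-1}` inside `ℤ_{mp}`. -/
def jumpSet (m p : ℕ) : Set (ZMod (m * p)) :=
  {a | ∃ r < m, a = ((p - 1 + r * p : ℕ) : ZMod (m * p)) ∨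
                a = ((p + 1 + r * p : ℕ) : ZMod (m * p))}

/-- The circulant graph `C(m,p)` on vertex set `ℤ_{mp}`: `i` and `j` are adjacent iff
`j - i (mod mp)` lies in the jump set. -/
def circC (m p : ℕ) : SimpleGraph (ZMod (m * p)) :=
  SimpleGraph.circulantGraph (jumpSet m p)

/-- The set `M_i = {i + r·p : 0 ≤ r ≤ m-1}` in `ℤ_{mp}`. -/
def Mset (m p i : ℕ) : Set (ZMod (m * p)) :=
  {v | ∃ r < m, v = ((i + r * p : ℕ) : ZMod (m * p))}

section Circulant

variable {m p : ℕ}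

/-- The reduction `ℤ_{mp} → ℤ_p`, whose fibres are the sets `M_i`. -/
def fibre (m p : ℕ) : ZMod (m * p) →+* ZMod p :=
  ZMod.castHom (dvd_mul_left p m) (ZMod p)

lemma fibre_natCast (n : ℕ) : fibre m p (n : ZMod (m * p)) = (n : ZMod p) :=
  map_natCast _ n

lemma fibre_eq_val_cast [NeZero (m * p)] (x : ZMod (m * p)) :
    fibre m p x = ((x.val : ℕ) : ZMod p) := by
  conv_lhs => rw [← ZMod.natCast_zmod_val x]
  exact fibre_natCast _

lemma mem_jumpSet_iff (hm : 2 ≤ m) (hp : 2 ≤ p) (a : ZMod (m * p)) :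
    a ∈ jumpSet m p ↔ fibre m p a = 1 ∨ fibre m p a = -1 := by
  have : NeZero (m * p) := ⟨by positivity⟩
  constructor
  · rintro ⟨r, -, rfl | rfl⟩
    · right
      rw [fibre_natCast]
      push_cast [Nat.cast_sub (show 1 ≤ p by omega)]
      simp
    · left
      rw [fibre_natCast]
      simp
  · have hlt : a.val < m * p := ZMod.val_lt a
    have hdiv : a.val / p < m := Nat.div_lt_of_lt_mul (hlt.trans_eq (mul_comm m p))
    have hdec := Nat.mod_add_div a.val p
    have ha := ZMod.natCast_zmod_val a
    rintro (h | h)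
    · have hmod : a.val % p = 1 := by
        rw [fibre_eq_val_cast] at h
        have hcast : ((a.val : ℕ) : ZMod p) = ((1 : ℕ) : ZMod p) := by simpa using h
        rw [ZMod.natCast_eq_natCast_iff'] at hcast
        rwa [Nat.mod_eq_of_lt (show 1 < p by omega)] at hcast
      obtain hq | hq := Nat.eq_zero_or_pos (a.val / p)
      · -- here `a = 1`, which occurs in the jump set as `p + 1 + (m - 1) * p = m * p + 1`
        refine ⟨m - 1, by omega, Or.inr ?_⟩
        obtain ⟨k, rfl⟩ : ∃ k, m = k + 1 := ⟨m - 1, by omega⟩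
        have e : p + 1 + (k + 1 - 1) * p = (k + 1) * p + 1 := by
          rw [Nat.add_sub_cancel]; ring
        rw [e, Nat.cast_add, ZMod.natCast_self, zero_add, ← ha, ← hdec, hq, hmod]
        simp
      · refine ⟨a.val / p - 1, by omega, Or.inr ?_⟩
        obtain ⟨k, hk⟩ : ∃ k, a.val / p = k + 1 := ⟨a.val / p - 1, by omega⟩
        rw [hk, Nat.add_sub_cancel, ← ha]
        congr 1
        rw [← hdec, hmod, hk]; ring
    · have hmod : a.val % p = p - 1 := by
        rw [fibre_eq_val_cast] at h
        have hcast : ((a.val : ℕ) : ZMod p) = ((p - 1 : ℕ) : ZMod p) := by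
          rw [h, Nat.cast_sub (show 1 ≤ p by omega)]; simp
        rw [ZMod.natCast_eq_natCast_iff'] at hcast
        rwa [Nat.mod_eq_of_lt (show p - 1 < p by omega)] at hcast
      refine ⟨a.val / p, hdiv, Or.inl ?_⟩
      conv_lhs => rw [← ha, ← hdec, hmod, mul_comm p]

lemma circC_adj_iff (hm : 2 ≤ m) (hp : 2 ≤ p) (x y : ZMod (m * p)) :
    (circC m p).Adj x y ↔ fibre m p y = fibre m p x + 1 ∨ fibre m p y = fibre m p x - 1 := by
  have : Fact (1 < p) := ⟨by omega⟩
  have key : (circC m p).Adj x y ↔ x ≠ y ∧ (x - y ∈ jumpSet m p ∨ y - x ∈ jumpSet m p) := by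
    simp [circC, SimpleGraph.circulantGraph]
  rw [key, mem_jumpSet_iff hm hp, mem_jumpSet_iff hm hp, map_sub, map_sub]
  constructor
  · rintro ⟨-, (h | h) | (h | h)⟩
    · right; linear_combination -h
    · left; linear_combination -h
    · left; linear_combination h
    · right; linear_combination h
  · intro h
    refine ⟨?_, Or.inr ?_⟩
    · rintro rfl
      rcases h with h | h
      · exact one_ne_zero (α := ZMod p) (by linear_combination -h)
      · exact one_ne_zero (α := ZMod p) (by linear_combination h)
    · rcases h with h | h
      · left; linear_combination h
      · right; linear_combination h

lemma fibre_surjective : Function.Surjective (fibre m p) :=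
  ZMod.ringHom_surjective _

/-- The fibres are the classes of vertices with equal neighbourhoods. This fails for `p = 4`, where
`i + 1 = j - 1`, `i - 1 = j + 1` has the solution `j = i + 2 ≠ i`. -/
lemma fibre_eq_iff_twin (hm : 2 ≤ m) (hp : 2 ≤ p) (hp4 : p ≠ 4) (x y : ZMod (m * p)) :
    fibre m p x = fibre m p y ↔ ∀ z, (circC m p).Adj x z ↔ (circC m p).Adj y z := by
  constructor
  · intro h z
    rw [circC_adj_iff hm hp, circC_adj_iff hm hp, h]
  · intro h
    obtain ⟨z, hz⟩ := fibre_surjective (m := m) (fibre m p x + 1)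
    obtain ⟨w, hw⟩ := fibre_surjective (m := m) (fibre m p y + 1)
    have h1 := (h z).1 ((circC_adj_iff hm hp _ _).2 (Or.inl hz))
    have h2 := (h w).2 ((circC_adj_iff hm hp _ _).2 (Or.inl hw))
    rw [circC_adj_iff hm hp] at h1 h2
    rcases h1 with h1 | h1
    · linear_combination h1 - hz
    rcases h2 with h2 | h2
    · linear_combination hw - h2
    have h4 : ((4 : ℕ) : ZMod p) = 0 := by
      push_cast
      linear_combination h1 - hz + h2 - hw
    rw [ZMod.natCast_eq_zero_iff] at h4
    have hle : p ≤ 4 := Nat.le_of_dvd (by norm_num) h4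
    obtain rfl : p = 2 := by
      interval_cases p
      · rfl
      · omega
      · omega
    have htwo : (2 : ZMod 2) = 0 := rfl
    linear_combination h1 - hz - htwo

/-- The label missing from the fibre over `i`: it is `0` only for `i = 0` and `1` only for
`i = 1`. -/
def gap (hm : 2 ≤ m) (i : ZMod p) : Fin (m + 1) :=
  if i = 0 then ⟨0, by omega⟩ else if i = 1 then ⟨1, by omega⟩ else ⟨2, by omega⟩

lemma eq_zero_of_gap_eq (hm : 2 ≤ m) {i : ZMod p} (h : gap hm i = gap hm (0 : ZMod p)) : i = 0 := by
  by_contra h0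
  by_cases h1 : i = 1 <;> simp_all [gap]

lemma eq_one_of_gap_eq (hm : 2 ≤ m) (hp : 2 ≤ p) {i : ZMod p}
    (h : gap hm i = gap hm (1 : ZMod p)) : i = 1 := by
  have : Fact (1 < p) := ⟨by omega⟩
  by_contra h1
  by_cases h0 : i = 0 <;> simp_all [gap]

lemma val_div_lt (hm : 2 ≤ m) (hp : 2 ≤ p) (x : ZMod (m * p)) : x.val / p < m := by
  have : NeZero (m * p) := ⟨by positivity⟩
  exact Nat.div_lt_of_lt_mul ((ZMod.val_lt x).trans_eq (mul_comm m p))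

/-- The labeling: the vertex `i + r * p` with `0 ≤ i < p` and `0 ≤ r < m` receives the `r`-th label
different from `gap i`. -/
def label (hm : 2 ≤ m) (hp : 2 ≤ p) (x : ZMod (m * p)) : Fin (m + 1) :=
  (gap hm (fibre m p x)).succAbove ⟨x.val / p, val_div_lt hm hp x⟩

lemma label_ne_gap (hm : 2 ≤ m) (hp : 2 ≤ p) (x : ZMod (m * p)) :
    label hm hp x ≠ gap hm (fibre m p x) :=
  Fin.succAbove_ne _ _

lemma eq_of_label_eq (hm : 2 ≤ m) (hp : 2 ≤ p) {x y : ZMod (m * p)}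
    (hf : fibre m p x = fibre m p y) (hl : label hm hp x = label hm hp y) : x = y := by
  have : NeZero (m * p) := ⟨by positivity⟩
  rw [label, label, hf] at hl
  have hdiv : x.val / p = y.val / p := congrArg Fin.val (Fin.succAbove_right_injective hl)
  rw [fibre_eq_val_cast, fibre_eq_val_cast, ZMod.natCast_eq_natCast_iff'] at hf
  apply ZMod.val_injective
  rw [← Nat.mod_add_div x.val p, hf, hdiv, Nat.mod_add_div]

lemma exists_label_eq (hm : 2 ≤ m) (hp : 2 ≤ p) (i : ZMod p) {l : Fin (m + 1)}
    (hl : l ≠ gap hm i) : ∃ y : ZMod (m * p), fibre m p y = i ∧ label hm hp y = l := by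
  have : NeZero p := ⟨by omega⟩
  obtain ⟨r, rfl⟩ := Fin.exists_succAbove_eq hl
  have hi : i.val < p := ZMod.val_lt i
  have hf : fibre m p ((i.val + r * p : ℕ) : ZMod (m * p)) = i := by
    rw [fibre_natCast]; simp
  refine ⟨_, hf, ?_⟩
  have hlt : i.val + r * p < m * p := by
    have := Nat.mul_le_mul_right p (Nat.succ_le_of_lt r.isLt)
    rw [Nat.succ_mul] at this
    omega
  have hdiv : ((i.val + r * p : ℕ) : ZMod (m * p)).val / p = r := by
    rw [ZMod.val_natCast, Nat.mod_eq_of_lt hlt, Nat.add_mul_div_right _ _ (by omega),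
      Nat.div_eq_of_lt hi, zero_add]
  rw [label, hf]
  congr 1
  exact Fin.ext hdiv

lemma label_isDistinguishing (hm : 2 ≤ m) (hp : 2 ≤ p) (hp4 : p ≠ 4) :
    IsDistinguishing (circC m p) (label hm hp) := by
  intro σ hσ hc
  have : NeZero p := ⟨by omega⟩
  have hfib : ∀ x y, fibre m p (σ x) = fibre m p (σ y) ↔ fibre m p x = fibre m p y := by
    intro x y
    rw [fibre_eq_iff_twin hm hp hp4, fibre_eq_iff_twin hm hp hp4, σ.surjective.forall]
    simp only [hσ _ _]
  have hgap : ∀ x, gap hm (fibre m p (σ x)) = gap hm (fibre m p x) := by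
    intro x
    by_contra hne
    -- otherwise the label missing over `σ x` occurs at some `y` in the fibre of `x`, hence at `σ y`
    obtain ⟨y, hy, hly⟩ := exists_label_eq hm hp _ hne
    refine label_ne_gap hm hp (σ y) ?_
    rw [hc, hly, (hfib y x).2 hy]
  have hstep : ∀ n : ℕ, (∀ x, fibre m p x = (n : ZMod p) → fibre m p (σ x) = (n : ZMod p)) ∧
      (∀ x, fibre m p x = ((n + 1 : ℕ) : ZMod p) →
        fibre m p (σ x) = ((n + 1 : ℕ) : ZMod p)) := by
    intro n
    induction n with
    | zero =>
      refine ⟨fun x hx => ?_, fun x hx => ?_⟩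
      · rw [Nat.cast_zero] at hx ⊢
        exact eq_zero_of_gap_eq hm (by rw [hgap, hx])
      · rw [zero_add, Nat.cast_one] at hx ⊢
        exact eq_one_of_gap_eq hm hp (by rw [hgap, hx])
    | succ n ih =>
      refine ⟨ih.2, fun x hx => ?_⟩
      obtain ⟨y, hy⟩ := fibre_surjective (m := m) ((n + 1 : ℕ) : ZMod p)
      obtain ⟨z, hz⟩ := fibre_surjective (m := m) (n : ZMod p)
      have hadj : (circC m p).Adj (σ y) (σ x) := by
        rw [hσ, circC_adj_iff hm hp, hx, hy]
        left; push_cast; ring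
      rw [circC_adj_iff hm hp, ih.2 y hy] at hadj
      rcases hadj with h | h
      · rw [h]; push_cast; ring
      · -- `σ x` lies over `n`, like `σ z`, so `x` lies over `n`, and `n = n + 2` in `ℤ_p`
        have hn : fibre m p (σ x) = (n : ZMod p) := by rw [h]; push_cast; ring
        have hxz := (hfib x z).1 (by rw [hn, ih.1 z hz])
        rw [hn, ← hz, ← hxz, hx]
  refine Equiv.ext fun x => eq_of_label_eq hm hp ?_ (hc x)
  have := (hstep (fibre m p x).val).1 x (ZMod.natCast_zmod_val _).symm
  rwa [ZMod.natCast_zmod_val] at this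

end Circulant

theorem stmt_7 (m p : ℕ) (hm : 2 ≤ m) (hp : 2 ≤ p) (hp4 : p ≠ 4) :
    distinguishingNumber (circC m p) ≤ m + 1 :=
  Nat.sInf_le ⟨label hm hp, label_isDistinguishing hm hp hp4⟩
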